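/- arXiv:2210.02540 — 2 statements merged into one kernel-verified Lean document; each statement's English description precedes it below -/
import Mathlib

section
/- Let k ≥ 1, d ∈ (1/2 − 1/(2k), 1/2), λ > 0, and for t ≥ 0 set h_t^λ(x) = ∫_0^t ∏_{i=1}^k (s − x_i)_+^{d−1} e^{−λ(s−x_i)_+} ds for x ∈ ℝ^k. Then for all s, t ≥ 0, ∫_{ℝ^k} h_t^λ(x) h_s^λ(x) dx = ∫_0^t ∫_0^s [ (|u−v|/2)^{2d−1} ∫_1^∞ (w² − 1)^{d−1} e^{−λ|u−v| w} dw ]^k dv du, with absolute convergence. -/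
open MeasureTheory Real Set

/-- The kernel `h_t^λ` of the tempered Hermite process:
`h_t^λ(x) = ∫_0^t ∏ᵢ (s−xᵢ)₊^{d−1} e^{−λ(s−xᵢ)₊} ds`. -/
noncomputable def tHermiteKernel (k : ℕ) (d lam t : ℝ) (x : Fin k → ℝ) : ℝ :=
  ∫ s in Set.Ioc (0 : ℝ) t,
    ∏ i, ((max (s - x i) 0) ^ (d - 1) * Real.exp (-lam * max (s - x i) 0))

/-!
Writing `g` for the one-dimensional kernel `z ↦ z₊^{d−1} e^{−λz₊}`, Fubini turns the left side into
the double integral of `(∫ g(u−y) g(v−y) dy)^k`. Centring and rescaling `y` at half the lag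
`|u−v|` turns the inner integral into the Bessel-type integral over `(1, ∞)`.

Absolute convergence is a bound at small lags. Trading the factor `(w²−1)^{d−e}` against a part of
the exponential bounds the autocorrelation by a multiple of `|u−v|^{2e−1}` for any `e ≤ d` with
`0 < e < 1/2` (only `e = d` when `λ = 0`), and `|u−v|^{(2e−1)k}` is locally integrable as soon as
`e > 1/2 − 1/(2k)`.
-/

section PowerKernels

variable {𝕜 ι α α' β γ : Type*} [RCLike 𝕜] [Fintype ι] [MeasurableSpace α] [MeasurableSpace α']
  [MeasurableSpace γ] {μ : Measure α} {μ' : Measure α'} {ρ : Measure γ} [SFinite μ] [SFinite μ']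
  {F : α → β → 𝕜} {G : α' → β → 𝕜}

lemma integral_prod_pi_mul (x : ι → β) :
    ∫ z : α × α', ∏ i, (F z.1 (x i) * G z.2 (x i)) ∂μ.prod μ' =
      (∫ u, ∏ i, F u (x i) ∂μ) * ∫ v, ∏ i, G v (x i) ∂μ' := by
  simp only [Finset.prod_mul_distrib]
  exact integral_prod_mul (fun u => ∏ i, F u (x i)) fun v => ∏ i, G v (x i)

variable [MeasurableSpace β] {ν : Measure β} [SigmaFinite ν]

lemma integrable_prod_pi_of_integrable_pow {K : γ → β → 𝕜} (hK : Measurable (Function.uncurry K))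
    (hint : ∀ᵐ z ∂ρ, Integrable (K z) ν)
    (hpow : Integrable (fun z => (∫ y, ‖K z y‖ ∂ν) ^ Fintype.card ι) ρ) :
    Integrable (fun p : γ × (ι → β) => ∏ i, K p.1 (p.2 i)) (ρ.prod (Measure.pi fun _ => ν)) := by
  have hmeas : Measurable fun p : γ × (ι → β) => ∏ i, K p.1 (p.2 i) :=
    Finset.measurable_fun_prod _ fun i _ =>
      hK.comp (measurable_fst.prodMk ((measurable_pi_apply i).comp measurable_snd))
  rw [integrable_prod_iff hmeas.aestronglyMeasurable]
  refine ⟨hint.mono fun z hz => Integrable.fintype_prod fun _ => hz, hpow.congr ?_⟩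
  refine .of_forall fun z => ?_
  simp only [norm_prod]
  exact (integral_fintype_prod_eq_pow fun y => ‖K z y‖).symm

lemma integrable_integral_prod_pi_mul
    (h : Integrable (fun p : (α × α') × (ι → β) => ∏ i, (F p.1.1 (p.2 i) * G p.1.2 (p.2 i)))
      ((μ.prod μ').prod (Measure.pi fun _ => ν))) :
    Integrable (fun x : ι → β => (∫ u, ∏ i, F u (x i) ∂μ) * ∫ v, ∏ i, G v (x i) ∂μ')
      (Measure.pi fun _ => ν) := by
  simpa only [integral_prod_pi_mul] using h.integral_prod_right

lemma integral_integral_prod_pi_mul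
    (h : Integrable (fun p : (α × α') × (ι → β) => ∏ i, (F p.1.1 (p.2 i) * G p.1.2 (p.2 i)))
      ((μ.prod μ').prod (Measure.pi fun _ => ν))) :
    ∫ x : ι → β, (∫ u, ∏ i, F u (x i) ∂μ) * ∫ v, ∏ i, G v (x i) ∂μ' ∂Measure.pi (fun _ => ν) =
      ∫ z, (∫ y, F z.1 y * G z.2 y ∂ν) ^ Fintype.card ι ∂μ.prod μ' :=
  calc _ = ∫ x : ι → β, ∫ z, ∏ i, (F z.1 (x i) * G z.2 (x i)) ∂μ.prod μ'
        ∂Measure.pi (fun _ => ν) := by simp only [integral_prod_pi_mul]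
    _ = ∫ z, ∫ x : ι → β, ∏ i, (F z.1 (x i) * G z.2 (x i)) ∂Measure.pi (fun _ => ν) ∂μ.prod μ' :=
      (integral_integral_swap
        (f := fun (z : α × α') (x : ι → β) => ∏ i, (F z.1 (x i) * G z.2 (x i))) h).symm
    _ = _ := integral_congr_ae <| .of_forall fun z =>
      integral_fintype_prod_eq_pow fun y => F z.1 y * G z.2 y

end PowerKernels

lemma ae_prod_fst_ne_snd {α : Type*} [MeasurableSpace α] [MeasurableEq α] (μ ν : Measure α)
    [SFinite ν] [NullSingletonClass ν] : ∀ᵐ z ∂μ.prod ν, z.1 ≠ z.2 := by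
  have hmeas : MeasurableSet {z : α × α | z.1 ≠ z.2} :=
    (measurableSet_eq_fun measurable_fst measurable_snd).compl
  rw [Measure.ae_prod_iff_ae_ae hmeas]
  exact .of_forall fun x => (Measure.ae_ne ν x).mono fun _ => Ne.symm

lemma integrableOn_comp_sub_of_locallyIntegrable {G E : Type*} [AddGroup G] [TopologicalSpace G]
    [IsTopologicalAddGroup G] [T2Space G] [SecondCountableTopology G] [MeasurableSpace G]
    [BorelSpace G] {μ : Measure G} [SFinite μ] [IsFiniteMeasureOnCompacts μ]
    [μ.IsAddRightInvariant] [NormedAddCommGroup E] [NormedSpace ℝ E] {f : G → E}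
    (hf : LocallyIntegrable f μ) {K L : Set G} (hK : IsCompact K) (hL : IsCompact L) :
    IntegrableOn (fun z : G × G => f (z.1 - z.2)) (K ×ˢ L) (μ.prod μ) := by
  set D := (fun z : G × G => z.1 - z.2) '' K ×ˢ L
  have hD : IsCompact D := (hK.prod hL).image continuous_sub
  have hone : Integrable (L.indicator fun _ => (1 : ℝ)) μ :=
    (integrable_indicator_iff hL.measurableSet).2 (integrableOn_const hL.measure_ne_top)
  have hfD : Integrable (D.indicator f) μ :=
    (integrable_indicator_iff hD.measurableSet).2 (hf.integrableOn_isCompact hD)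
  refine (hone.convolution_integrand (.lsmul ℝ ℝ) hfD).integrableOn.congr_fun ?_
    (hK.measurableSet.prod hL.measurableSet)
  rintro ⟨u, v⟩ ⟨hu, hv⟩
  have hsub : u - v ∈ D := ⟨(u, v), ⟨hu, hv⟩, rfl⟩
  simp only [indicator_of_mem hv, indicator_of_mem hsub,
    ContinuousLinearMap.lsmul_apply, one_smul]

lemma integrableOn_sq_sub_one_rpow {p : ℝ} (hp : -1 < p) (hp' : p < -1 / 2) :
    IntegrableOn (fun w : ℝ => (w ^ 2 - 1) ^ p) (Ioi 1) := by
  have hmeas : Measurable fun w : ℝ => (w ^ 2 - 1) ^ p := by fun_prop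
  rw [← Ioc_union_Ioi_eq_Ioi one_le_two]
  refine IntegrableOn.union ?_ ?_
  · have hdom : IntegrableOn (fun w : ℝ => (w - 1) ^ p) (Ioc 1 2) := by
      have := (intervalIntegral.intervalIntegrable_rpow' (a := 0) (b := 1) hp).comp_sub_right 1
      rwa [zero_add, one_add_one_eq_two, intervalIntegrable_iff, uIoc_of_le one_le_two] at this
    refine hdom.mono' hmeas.aestronglyMeasurable ?_
    filter_upwards [ae_restrict_mem measurableSet_Ioc] with w ⟨hw, _⟩
    have hle : w - 1 ≤ w ^ 2 - 1 := by nlinarith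
    rw [Real.norm_of_nonneg (rpow_nonneg (by linarith) _)]
    exact rpow_le_rpow_of_nonpos (sub_pos.2 hw) hle (by linarith)
  · have hdom : IntegrableOn (fun w : ℝ => (1 / 4) ^ p * w ^ (2 * p)) (Ioi 2) :=
      (integrableOn_Ioi_rpow_of_lt (by linarith) two_pos).const_mul _
    refine hdom.mono' hmeas.aestronglyMeasurable ?_
    filter_upwards [ae_restrict_mem measurableSet_Ioi] with w (hw : 2 < w)
    have hle : 1 / 4 * w ^ 2 ≤ w ^ 2 - 1 := by nlinarith
    rw [Real.norm_of_nonneg (rpow_nonneg (by nlinarith) _), rpow_mul (by linarith), rpow_two,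
      ← mul_rpow (by norm_num) (sq_nonneg w)]
    exact rpow_le_rpow_of_nonpos (by positivity) hle (by linarith)

-- For `c = p = 0` the right side is `(0 / 0) ^ 0 = 1`.
lemma rpow_mul_exp_neg_mul_le {p c x : ℝ} (hp : 0 ≤ p) (hc : 0 ≤ c) (hpc : c = 0 → p = 0)
    (hx : 0 ≤ x) : x ^ p * exp (-c * x) ≤ (p / c) ^ p := by
  rcases hp.eq_or_lt with rfl | hp
  · simpa using mul_nonneg hc hx
  have hc : 0 < c := hc.lt_of_ne fun h => hp.ne' (hpc h.symm)
  have hle : x ≤ p / c * exp (c * x / p) :=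
    calc x = p / c * (c * x / p) := by field_simp
      _ ≤ p / c * exp (c * x / p) := by
        gcongr
        linarith [add_one_le_exp (c * x / p)]
  calc x ^ p * exp (-c * x) ≤ (p / c * exp (c * x / p)) ^ p * exp (-c * x) := by gcongr
    _ = (p / c) ^ p * (exp (c * x) * exp (-c * x)) := by
      rw [mul_rpow (by positivity) (exp_pos _).le, ← exp_mul, div_mul_cancel₀ _ hp.ne', mul_assoc]
    _ = (p / c) ^ p := by rw [← exp_add, neg_mul, add_neg_cancel, exp_zero, mul_one]

lemma sq_sub_one_rpow_mul_exp_le {d e c w : ℝ} (hed : e ≤ d) (hc : 0 ≤ c) (hcd : c = 0 → d = e)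
    (hw : 1 < w) :
    (w ^ 2 - 1) ^ (d - 1) * exp (-c * w) ≤
      (2 * (d - e) / c) ^ (2 * (d - e)) * (w ^ 2 - 1) ^ (e - 1) := by
  have hw0 : 0 < w ^ 2 - 1 := by nlinarith
  have hpow : (w ^ 2 - 1) ^ (d - e) ≤ w ^ (2 * (d - e)) := by
    rw [rpow_mul (by linarith), rpow_two]
    exact rpow_le_rpow hw0.le (by linarith) (sub_nonneg.2 hed)
  calc (w ^ 2 - 1) ^ (d - 1) * exp (-c * w)
      = (w ^ 2 - 1) ^ (d - e) * exp (-c * w) * (w ^ 2 - 1) ^ (e - 1) := by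
        rw [← sub_add_sub_cancel d e 1, rpow_add hw0]; ring
    _ ≤ w ^ (2 * (d - e)) * exp (-c * w) * (w ^ 2 - 1) ^ (e - 1) := by gcongr
    _ ≤ (2 * (d - e) / c) ^ (2 * (d - e)) * (w ^ 2 - 1) ^ (e - 1) := by
      gcongr
      exact rpow_mul_exp_neg_mul_le (by linarith) hc (fun h => by rw [hcd h, sub_self, mul_zero])
        (by linarith)

lemma exists_mem_Ioo_le_eq_of_eq_zero {b d c : ℝ} (hb : b < 1 / 2) (hbd : b < d)
    (hcd : c = 0 → d < 1 / 2) : ∃ e ∈ Ioo b (1 / 2), e ≤ d ∧ (c = 0 → d = e) := by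
  rcases lt_or_ge d (1 / 2) with hd | hd
  · exact ⟨d, ⟨hbd, hd⟩, le_rfl, fun _ => rfl⟩
  · obtain ⟨e, hbe, he⟩ := exists_between hb
    exact ⟨e, ⟨hbe, he⟩, (he.trans_le hd).le, fun h => absurd (hcd h) hd.not_gt⟩

lemma integrableOn_sq_sub_one_rpow_mul_exp {d c : ℝ} (hd : 0 < d) (hc : 0 ≤ c)
    (hcd : c = 0 → d < 1 / 2) :
    IntegrableOn (fun w : ℝ => (w ^ 2 - 1) ^ (d - 1) * exp (-c * w)) (Ioi 1) := by
  obtain ⟨e, ⟨he, he'⟩, hed, hce⟩ := exists_mem_Ioo_le_eq_of_eq_zero one_half_pos hd hcd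
  refine ((integrableOn_sq_sub_one_rpow (p := e - 1) (by linarith) (by linarith)).const_mul
    ((2 * (d - e) / c) ^ (2 * (d - e)))).mono' (Measurable.aestronglyMeasurable (by fun_prop)) ?_
  filter_upwards [ae_restrict_mem measurableSet_Ioi] with w (hw : 1 < w)
  rw [Real.norm_of_nonneg (mul_nonneg (rpow_nonneg (by nlinarith) _) (exp_pos _).le)]
  exact sq_sub_one_rpow_mul_exp_le hed hc hce hw

/-- The causal kernel `z₊^{d−1} e^{−λz₊}` of tempered fractional integration, whose products the
tempered Hermite kernel integrates. It vanishes for `z ≤ 0` only if `d ≠ 1`, because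
`0 ^ 0 = 1`. -/
noncomputable def temperedPower (d lam z : ℝ) : ℝ :=
  max z 0 ^ (d - 1) * exp (-lam * max z 0)

/-- The autocorrelation of `temperedPower d lam` at lag `a > 0`, in its integral representation. In
terms of the modified Bessel function of the second kind it is, for `lam > 0`,
`(Γ(d)/√π) (a/(2λ))^{d−1/2} K_{1/2−d}(λa)`. -/
noncomputable def temperedPowerCorr (d lam a : ℝ) : ℝ :=
  (a / 2) ^ (2 * d - 1) * ∫ w in Ioi (1 : ℝ), (w ^ 2 - 1) ^ (d - 1) * exp (-lam * a * w)

section TemperedPower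

variable {d lam : ℝ}

lemma temperedPower_nonneg (d lam z : ℝ) : 0 ≤ temperedPower d lam z := by
  unfold temperedPower
  positivity

lemma measurable_temperedPower (d lam : ℝ) : Measurable (temperedPower d lam) := by
  unfold temperedPower
  fun_prop

lemma temperedPower_of_pos {z : ℝ} (hz : 0 < z) :
    temperedPower d lam z = z ^ (d - 1) * exp (-lam * z) := by
  rw [temperedPower, max_eq_left hz.le]

lemma temperedPower_of_nonpos (hd : d ≠ 1) {z : ℝ} (hz : z ≤ 0) : temperedPower d lam z = 0 := by
  rw [temperedPower, max_eq_right hz, zero_rpow (sub_ne_zero.2 hd), zero_mul]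

lemma temperedPower_mul_temperedPower (hd : d ≠ 1) {b : ℝ} (hb : 0 < b) (w : ℝ) :
    temperedPower d lam (b * (w + 1)) * temperedPower d lam (b * (w - 1)) =
      (Ioi (1 : ℝ)).indicator
        (fun w => b ^ (2 * d - 2) * ((w ^ 2 - 1) ^ (d - 1) * exp (-lam * (2 * b) * w))) w := by
  rcases lt_or_ge 1 w with hw | hw
  · have hplus : 0 < w + 1 := by linarith
    have hminus : 0 < w - 1 := by linarith
    have hpow : b ^ (2 * d - 2) = b ^ (d - 1) * b ^ (d - 1) := by rw [← rpow_add hb]; ring_nf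
    have hexp : exp (-lam * (2 * b) * w) =
        exp (-lam * (b * (w + 1))) * exp (-lam * (b * (w - 1))) := by rw [← exp_add]; ring_nf
    have hsq : (w ^ 2 - 1) ^ (d - 1) = (w + 1) ^ (d - 1) * (w - 1) ^ (d - 1) := by
      rw [← mul_rpow hplus.le hminus.le]; ring_nf
    rw [indicator_of_mem (mem_Ioi.2 hw), temperedPower_of_pos (by positivity),
      temperedPower_of_pos (by positivity), mul_rpow hb.le hplus.le, mul_rpow hb.le hminus.le,
      hpow, hexp, hsq]
    ring
  · rw [indicator_of_notMem (notMem_Ioi.2 hw),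
      temperedPower_of_nonpos hd (mul_nonpos_of_nonneg_of_nonpos hb.le (sub_nonpos.2 hw)), mul_zero]

lemma temperedPower_mul_comp_affine (hd : d ≠ 1) {u v : ℝ} (huv : v < u) :
    (fun w => temperedPower d lam (u - ((u + v) / 2 - (u - v) / 2 * w)) *
        temperedPower d lam (v - ((u + v) / 2 - (u - v) / 2 * w))) =
      (Ioi (1 : ℝ)).indicator fun w => ((u - v) / 2) ^ (2 * d - 2) *
        ((w ^ 2 - 1) ^ (d - 1) * exp (-lam * (u - v) * w)) := by
  funext w
  have hu : u - ((u + v) / 2 - (u - v) / 2 * w) = (u - v) / 2 * (w + 1) := by ring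
  have hv : v - ((u + v) / 2 - (u - v) / 2 * w) = (u - v) / 2 * (w - 1) := by ring
  rw [hu, hv, temperedPower_mul_temperedPower hd (half_pos (sub_pos.2 huv)),
    mul_div_cancel₀ _ two_ne_zero]

lemma integrable_temperedPower_mul (hd₀ : 0 < d) (hd : d ≠ 1) (hlam : 0 ≤ lam)
    (hd₂ : lam = 0 → d < 1 / 2) {u v : ℝ} (huv : u ≠ v) :
    Integrable fun y => temperedPower d lam (u - y) * temperedPower d lam (v - y) := by
  wlog hlt : v < u generalizing u v
  · simpa only [mul_comm] using this huv.symm (huv.lt_of_le (not_lt.1 hlt))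
  have hlag : 0 < u - v := sub_pos.2 hlt
  rw [← integrable_comp_sub_left _ ((u + v) / 2),
    ← integrable_comp_mul_left_iff _ (half_pos hlag).ne', temperedPower_mul_comp_affine hd hlt,
    integrable_indicator_iff measurableSet_Ioi]
  have hint := integrableOn_sq_sub_one_rpow_mul_exp hd₀ (mul_nonneg hlam hlag.le)
    fun h => hd₂ ((mul_eq_zero_iff_right hlag.ne').1 h)
  simp only [← neg_mul] at hint
  exact hint.const_mul _

lemma integral_temperedPower_mul (hd : d ≠ 1) {u v : ℝ} (huv : u ≠ v) :
    ∫ y, temperedPower d lam (u - y) * temperedPower d lam (v - y) =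
      temperedPowerCorr d lam |u - v| := by
  wlog hlt : v < u generalizing u v
  · simpa only [mul_comm, abs_sub_comm] using this huv.symm (huv.lt_of_le (not_lt.1 hlt))
  have hlag : 0 < u - v := sub_pos.2 hlt
  set b := (u - v) / 2 with hb
  have hb0 : 0 < b := half_pos hlag
  set H : ℝ → ℝ := fun y => temperedPower d lam (u - y) * temperedPower d lam (v - y) with hH
  have hpow : b ^ (2 * d - 1) = b * b ^ (2 * d - 2) := by
    rw [mul_comm b, ← rpow_add_one hb0.ne']; ring_nf
  calc ∫ y, H y = b * (b⁻¹ * ∫ y, H y) := by rw [mul_inv_cancel_left₀ hb0.ne']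
    _ = b * ∫ w, H ((u + v) / 2 - b * w) := by
      rw [Measure.integral_comp_mul_left (fun w => H ((u + v) / 2 - w)),
        integral_sub_left_eq_self, abs_of_pos (inv_pos.2 hb0), smul_eq_mul]
    _ = temperedPowerCorr d lam |u - v| := by
      simp only [hH, hb]
      rw [temperedPower_mul_comp_affine hd hlt, integral_indicator measurableSet_Ioi,
        integral_const_mul, abs_of_pos hlag, temperedPowerCorr, ← hb, hpow, mul_assoc]

lemma temperedPowerCorr_nonneg {a : ℝ} (ha : 0 ≤ a) : 0 ≤ temperedPowerCorr d lam a := by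
  refine mul_nonneg (by positivity) (setIntegral_nonneg measurableSet_Ioi fun w hw => ?_)
  have hw : 1 < w := hw
  exact mul_nonneg (rpow_nonneg (by nlinarith) _) (exp_pos _).le

lemma measurable_temperedPowerCorr (d lam : ℝ) : Measurable (temperedPowerCorr d lam) := by
  have hint : Measurable fun a : ℝ =>
      ∫ w in Ioi (1 : ℝ), (w ^ 2 - 1) ^ (d - 1) * exp (-lam * a * w) :=
    (StronglyMeasurable.integral_prod_right
      (Measurable.stronglyMeasurable (by fun_prop))).measurable
  unfold temperedPowerCorr
  fun_prop

lemma exists_temperedPowerCorr_le {e : ℝ} (he₀ : 0 < e) (he : e < 1 / 2) (hed : e ≤ d)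
    (hlam : 0 ≤ lam) (hde : lam = 0 → d = e) :
    ∃ C, ∀ a > 0, temperedPowerCorr d lam a ≤ C * a ^ (2 * e - 1) := by
  set q := 2 * (d - e) with hq
  set J := ∫ w in Ioi (1 : ℝ), (w ^ 2 - 1) ^ (e - 1)
  refine ⟨(1 / 2) ^ (2 * d - 1) * ((q / lam) ^ q * J), fun a ha => ?_⟩
  have hle : ∫ w in Ioi (1 : ℝ), (w ^ 2 - 1) ^ (d - 1) * exp (-(lam * a) * w) ≤
      (q / (lam * a)) ^ q * J := by
    have hla : lam * a = 0 → d = e := fun h => hde ((mul_eq_zero_iff_right ha.ne').1 h)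
    rw [← integral_const_mul]
    refine setIntegral_mono_on
      (integrableOn_sq_sub_one_rpow_mul_exp (by linarith) (by positivity) fun h => hla h ▸ he)
      ((integrableOn_sq_sub_one_rpow (by linarith) (by linarith)).const_mul _)
      measurableSet_Ioi fun w hw => ?_
    exact sq_sub_one_rpow_mul_exp_le hed (by positivity) hla hw
  have hpow : a ^ (2 * d - 1) * (1 / a) ^ q = a ^ (2 * e - 1) := by
    rw [one_div, inv_rpow ha.le, ← rpow_neg ha.le, ← rpow_add ha, hq]; ring_nf
  calc temperedPowerCorr d lam a
      ≤ (a / 2) ^ (2 * d - 1) * ((q / (lam * a)) ^ q * J) := by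
        rw [temperedPowerCorr, neg_mul]
        gcongr
    _ = (1 / 2) ^ (2 * d - 1) * ((q / lam) ^ q * J) * (a ^ (2 * d - 1) * (1 / a) ^ q) := by
      rw [div_mul_eq_div_mul_one_div, mul_rpow (div_nonneg (by linarith) hlam) (by positivity),
        div_eq_mul_one_div a, mul_rpow ha.le (by norm_num)]
      ring
    _ = _ := by rw [hpow]

lemma half_sub_one_div_nonneg {k : ℕ} (hk : 1 ≤ k) : 0 ≤ 1 / 2 - 1 / (2 * (k : ℝ)) := by
  have hk : (1 : ℝ) ≤ k := by exact_mod_cast hk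
  exact sub_nonneg.2 (one_div_le_one_div_of_le two_pos (by linarith))

lemma locallyIntegrable_temperedPowerCorr_abs_pow {k : ℕ} (hk : 1 ≤ k)
    (hd : 1 / 2 - 1 / (2 * (k : ℝ)) < d) (hlam : 0 ≤ lam) (hd₂ : lam = 0 → d < 1 / 2) :
    LocallyIntegrable fun x : ℝ => temperedPowerCorr d lam |x| ^ k := by
  have hk0 : (0 : ℝ) < k := by exact_mod_cast hk
  obtain ⟨e, ⟨hke, he⟩, hed, hde⟩ :=
    exists_mem_Ioo_le_eq_of_eq_zero (sub_lt_self _ (by positivity)) hd hd₂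
  have he₀ : 0 < e := (half_sub_one_div_nonneg hk).trans_lt hke
  have hα : (1 - 2 * e) * k < 1 := by
    have hhalf : 1 / (2 * (k : ℝ)) = 1 / k / 2 := by field_simp
    exact (lt_div_iff₀ hk0).1 (by linarith)
  obtain ⟨C, hC⟩ := exists_temperedPowerCorr_le he₀ he hed hlam hde
  refine locallyIntegrable_of_norm_le_rpow (C := C ^ k) (α := (1 - 2 * e) * k)
    (Module.finrank_self ℝ).ge (by simpa using hα) ?_
    ((measurable_temperedPowerCorr d lam).comp measurable_abs |>.pow_const k).aestronglyMeasurable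
  filter_upwards [Measure.ae_ne volume 0] with x hx
  have hnonneg := temperedPowerCorr_nonneg (d := d) (lam := lam) (abs_nonneg x)
  calc ‖temperedPowerCorr d lam |x| ^ k‖ = temperedPowerCorr d lam |x| ^ k :=
        Real.norm_of_nonneg (pow_nonneg hnonneg k)
    _ ≤ (C * |x| ^ (2 * e - 1)) ^ k := by
      gcongr
      exact hC _ (abs_pos.2 hx)
    _ = C ^ k * ‖x‖ ^ (-((1 - 2 * e) * k)) := by
      rw [mul_pow, ← rpow_mul_natCast (abs_nonneg x), Real.norm_eq_abs]
      ring_nf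

variable {k : ℕ} {A B : Set ℝ}

lemma integrable_temperedPowerCorr_abs_sub_pow (hk : 1 ≤ k)
    (hd₁ : 1 / 2 - 1 / (2 * (k : ℝ)) < d) (hlam : 0 ≤ lam) (hd₂ : lam = 0 → d < 1 / 2)
    (hA : Bornology.IsBounded A) (hB : Bornology.IsBounded B) :
    Integrable (fun z : ℝ × ℝ => temperedPowerCorr d lam |z.1 - z.2| ^ k)
      ((volume.restrict A).prod (volume.restrict B)) := by
  rw [Measure.prod_restrict]
  exact (integrableOn_comp_sub_of_locallyIntegrable
    (locallyIntegrable_temperedPowerCorr_abs_pow hk hd₁ hlam hd₂)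
    hA.isCompact_closure hB.isCompact_closure).mono_set (prod_mono subset_closure subset_closure)

lemma integrable_prod_temperedPower_mul (hk : 1 ≤ k) (hd₁ : 1 / 2 - 1 / (2 * (k : ℝ)) < d)
    (hd : d ≠ 1) (hlam : 0 ≤ lam) (hd₂ : lam = 0 → d < 1 / 2)
    (hA : Bornology.IsBounded A) (hB : Bornology.IsBounded B) :
    Integrable (fun p : (ℝ × ℝ) × (Fin k → ℝ) =>
        ∏ i, (temperedPower d lam (p.1.1 - p.2 i) * temperedPower d lam (p.1.2 - p.2 i)))
      (((volume.restrict A).prod (volume.restrict B)).prod volume) := by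
  have hne := ae_prod_fst_ne_snd (volume.restrict A) (volume.restrict B)
  have hd₀ : 0 < d := (half_sub_one_div_nonneg hk).trans_lt hd₁
  have hmeas := measurable_temperedPower d lam
  refine integrable_prod_pi_of_integrable_pow
    (K := fun (z : ℝ × ℝ) (y : ℝ) => temperedPower d lam (z.1 - y) * temperedPower d lam (z.2 - y))
    (by unfold Function.uncurry; fun_prop)
    (hne.mono fun z hz => integrable_temperedPower_mul hd₀ hd hlam hd₂ hz) ?_
  refine (integrable_temperedPowerCorr_abs_sub_pow hk hd₁ hlam hd₂ hA hB).congr ?_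
  filter_upwards [hne] with z hz
  simp only [Real.norm_of_nonneg (mul_nonneg (temperedPower_nonneg d lam _)
    (temperedPower_nonneg d lam _)), integral_temperedPower_mul hd hz, Fintype.card_fin]

end TemperedPower

theorem stmt13_general {k : ℕ} (hk : 1 ≤ k) {d : ℝ} (hd₁ : 1 / 2 - 1 / (2 * (k : ℝ)) < d)
    (hd : d ≠ 1) {lam : ℝ} (hlam : 0 ≤ lam) (hd₂ : lam = 0 → d < 1 / 2) (s t : ℝ) :
    Integrable (fun x : Fin k → ℝ => tHermiteKernel k d lam t x * tHermiteKernel k d lam s x) ∧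
    ∫ x : Fin k → ℝ, tHermiteKernel k d lam t x * tHermiteKernel k d lam s x =
      ∫ u in Ioc 0 t, ∫ v in Ioc 0 s, ((|u - v| / 2) ^ (2 * d - 1) *
        ∫ w in Ioi (1 : ℝ), (w ^ 2 - 1) ^ (d - 1) * exp (-lam * |u - v| * w)) ^ k := by
  have hbdd (r : ℝ) : Bornology.IsBounded (Ioc 0 r) := Metric.isBounded_Ioc 0 r
  set g : ℝ → ℝ → ℝ := fun u y => temperedPower d lam (u - y)
  set μ : Measure (ℝ × ℝ) := (volume.restrict (Ioc 0 t)).prod (volume.restrict (Ioc 0 s))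
  have hint := integrable_prod_temperedPower_mul hk hd₁ hd hlam hd₂ (hbdd t) (hbdd s)
  have hcorr : ∀ᵐ z ∂μ, (∫ y, g z.1 y * g z.2 y) ^ k = temperedPowerCorr d lam |z.1 - z.2| ^ k :=
    (ae_prod_fst_ne_snd _ _).mono fun z hz => by rw [integral_temperedPower_mul hd hz]
  refine ⟨integrable_integral_prod_pi_mul (F := g) (G := g) hint, ?_⟩
  calc ∫ x : Fin k → ℝ, tHermiteKernel k d lam t x * tHermiteKernel k d lam s x
      = ∫ z, (∫ y, g z.1 y * g z.2 y) ^ Fintype.card (Fin k) ∂μ :=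
        integral_integral_prod_pi_mul (F := g) (G := g) hint
    _ = ∫ z, temperedPowerCorr d lam |z.1 - z.2| ^ k ∂μ := by
      rw [Fintype.card_fin]
      exact integral_congr_ae hcorr
    _ = _ := integral_prod _
      (integrable_temperedPowerCorr_abs_sub_pow hk hd₁ hlam hd₂ (hbdd t) (hbdd s))

theorem stmt13 {k : ℕ} (hk : 1 ≤ k) (d : ℝ)
    (hd₁ : 1/2 - 1/(2*(k : ℝ)) < d) (hd₂ : d < 1/2)
    (lam : ℝ) (hlam : 0 < lam) (s t : ℝ) (hs : 0 ≤ s) (ht : 0 ≤ t) :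
    -- absolute convergence
    Integrable (fun x : Fin k → ℝ =>
      tHermiteKernel k d lam t x * tHermiteKernel k d lam s x) ∧
    -- the covariance identity
    (∫ x : Fin k → ℝ, tHermiteKernel k d lam t x * tHermiteKernel k d lam s x) =
      ∫ u in Set.Ioc (0 : ℝ) t, ∫ v in Set.Ioc (0 : ℝ) s,
        ((|u - v| / 2) ^ (2 * d - 1) *
          ∫ w in Set.Ioi (1 : ℝ),
            (w ^ 2 - 1) ^ (d - 1) * Real.exp (-lam * |u - v| * w)) ^ k :=
  stmt13_general hk hd₁ (hd₂.trans (by norm_num)).ne hlam.le (fun _ => hd₂) s t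
end

section
/- Let k ≥ 1, a ∈ (−1/2 − 1/(2k), −1/2), β ≠ 0 with −ka − k/2 − 1 < β < −ka − k/2, and let g₀ : (0,∞) → ℝ be measurable with g₀(c y) = c^a g₀(y) for all c > 0 and ∫_0^∞ |g₀(y) g₀(1+y)| dy < ∞; set g(x₁,…,x_k) = ∏_{i=1}^k g₀(x_i). Then for every λ > 0 and s, t ∈ ℝ, ∫_{ℝ^k} h_t^{λ,β}(x) h_s^{λ,β}(x) dx = ∫_ℝ ∫_ℝ l_s^β(u) l_t^β(v) · e^{−λ k |u−v|} · |u−v|^{k(2a+1)} · ( ∫_0^∞ g₀(y) g₀(1+y) e^{−2λ|u−v| y} dy )^k du dv, with absolute convergence. -/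
open MeasureTheory Real Set

/-- The fractional filter `l_t^β(s) = ((t−s)₊^β − (−s)₊^β)/β`. -/
noncomputable def ell (t b s : ℝ) : ℝ :=
  ((max (t - s) 0) ^ b - (max (-s) 0) ^ b) / b

/-- The fractionally filtered tempered generalized Hermite kernel `h_t^{λ,β}`
with product kernel `g(x₁,…,x_k) = ∏ᵢ g₀(xᵢ)`. -/
noncomputable def tghFiltProdKernel (k : ℕ) (g₀ : ℝ → ℝ) (lam b t : ℝ)
    (x : Fin k → ℝ) : ℝ :=
  ∫ s : ℝ, ell t b s *
    Set.indicator {s' : ℝ | ∀ i, x i < s'}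
      (fun s' => ∏ i, (g₀ (s' - x i) * Real.exp (-lam * (s' - x i)))) s

/-!
By Fubini, `⟨h_t, h_s⟩` is the double integral of `ell s b u * ell t b v` against the `k`-th power
of the one-dimensional inner product of the factors starting at `u` and `v`. Substituting
`x = min u v - |u - v| y` and using homogeneity, that inner product becomes
`e^{-lam |u - v|} |u - v|^{2a + 1}` times the overlap integral of `g₀`. Fubini is legitimate because
the same computation with `|g₀|` bounds the absolute integrand by a multiple of
`|ell s b u| |ell t b v| e^{-lam k |u - v|} |u - v|^γ`, `γ = k (2a + 1) ∈ (-1, 0)`, which is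
integrable by Young's convolution inequality: the exponential puts the kernel in every `L^q` with
`γ q > -1`, and `ell t b` lies in `L^p` as soon as `b p > -1` and `(b - 1) p < -1`.
-/

section RealPower

variable {a b c p x y z : ℝ}

theorem abs_rpow_sub_rpow_le (hc : 0 < c) (hx : c ≤ x) (hy : c ≤ y) (hb : b ≤ 1) :
    |y ^ b - x ^ b| ≤ |b| * c ^ (b - 1) * |y - x| := by
  refine (convex_Ici c).norm_image_sub_le_of_norm_hasDerivWithin_le
    (f := fun ξ : ℝ => ξ ^ b) (f' := fun ξ => b * ξ ^ (b - 1)) (fun ξ hξ => ?_)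
    (fun ξ hξ => ?_) hx hy
  · exact (hasDerivAt_rpow_const (Or.inl (hc.trans_le hξ).ne')).hasDerivWithinAt
  · rw [norm_mul, norm_eq_abs, norm_of_nonneg (rpow_nonneg (hc.le.trans hξ) _)]
    exact mul_le_mul_of_nonneg_left (rpow_le_rpow_of_nonpos hc hξ (by linarith)) (abs_nonneg b)

theorem exp_mul_rpow_mul_pow (hx : 0 ≤ x) (y : ℝ) (k : ℕ) :
    (exp (-c * x) * x ^ a * y) ^ k =
      exp (-c * k * x) * x ^ (k * a) * y ^ k := by
  rw [mul_pow, mul_pow, ← exp_nat_mul, mul_comm (k : ℝ) a, rpow_mul_natCast hx]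
  ring_nf

theorem mul_mul_le_of_inv_add_inv_add_inv_eq_two {q r : ℝ} (hx : 0 ≤ x) (hy : 0 ≤ y) (hz : 0 ≤ z)
    (hp : 1 ≤ p) (hq : 1 ≤ q) (hr : 1 ≤ r) (h : p⁻¹ + q⁻¹ + r⁻¹ = 2) :
    x * y * z ≤ (1 - r⁻¹) * (x ^ p * y ^ q) + (1 - q⁻¹) * (x ^ p * z ^ r)
      + (1 - p⁻¹) * (y ^ q * z ^ r) := by
  have hp' : 0 ≤ 1 - p⁻¹ := sub_nonneg.2 (inv_le_one_of_one_le₀ hp)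
  have hq' : 0 ≤ 1 - q⁻¹ := sub_nonneg.2 (inv_le_one_of_one_le₀ hq)
  have hr' : 0 ≤ 1 - r⁻¹ := sub_nonneg.2 (inv_le_one_of_one_le₀ hr)
  have split {w s α β : ℝ} (hw : 0 ≤ w) (hs : 1 ≤ s) (hα : 0 ≤ α) (hβ : 0 ≤ β)
      (hαβ : α + β = s⁻¹) : (w ^ s) ^ α * (w ^ s) ^ β = w := by
    rw [← rpow_add_of_nonneg (rpow_nonneg hw s) hα hβ, hαβ, rpow_rpow_inv hw (by linarith)]
  calc x * y * z
      = ((x ^ p) ^ (1 - r⁻¹) * (x ^ p) ^ (1 - q⁻¹)) * ((y ^ q) ^ (1 - r⁻¹) * (y ^ q) ^ (1 - p⁻¹))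
          * ((z ^ r) ^ (1 - q⁻¹) * (z ^ r) ^ (1 - p⁻¹)) := by
        rw [split hx hp hr' hq' (by linarith), split hy hq hr' hp' (by linarith),
          split hz hr hq' hp' (by linarith)]
    _ = (x ^ p * y ^ q) ^ (1 - r⁻¹) * (x ^ p * z ^ r) ^ (1 - q⁻¹)
          * (y ^ q * z ^ r) ^ (1 - p⁻¹) := by
        rw [mul_rpow (by positivity) (by positivity), mul_rpow (by positivity) (by positivity),
          mul_rpow (by positivity) (by positivity)]
        ring
    _ ≤ _ := geom_mean_le_arith_mean3_weighted hr' hq' hp' (by positivity) (by positivity)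
        (by positivity) (by linarith)

end RealPower

section Measure

variable {α : Type*} [MeasurableSpace α] {μ ν : Measure α}

theorem ae_fst_ne_snd [MeasurableEq α] [SFinite ν] [NullSingletonClass ν] :
    ∀ᵐ z : α × α ∂μ.prod ν, z.1 ≠ z.2 := by
  refine (Measure.ae_prod_iff_ae_ae
    (measurableSet_eq_fun measurable_fst measurable_snd).compl).2 (.of_forall fun x => ?_)
  filter_upwards [ν.ae_ne x] with y hy
  exact hy.symm

variable {E : Type*} [NormedAddCommGroup E]

theorem memLp_ofReal_iff_integrable_norm_rpow {f : α → E} {p : ℝ} (hp : 0 < p)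
    (hf : AEStronglyMeasurable f μ) :
    MemLp f (ENNReal.ofReal p) μ ↔ Integrable (fun x => ‖f x‖ ^ p) μ := by
  rw [← integrable_norm_rpow_iff hf (ENNReal.ofReal_pos.2 hp).ne' ENNReal.ofReal_ne_top,
    ENNReal.toReal_ofReal hp.le]

theorem integrable_comp_abs {f : ℝ → E} (hf : IntegrableOn f (Ioi 0)) :
    Integrable fun x => f |x| := by
  have hpos : IntegrableOn (fun x => f |x|) (Ioi 0) :=
    hf.congr_fun (fun x hx => by rw [abs_of_pos hx]) measurableSet_Ioi
  have hneg : IntegrableOn (fun x => f |x|) (Iio 0) := by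
    simpa only [abs_neg, neg_Ioi, neg_zero] using hpos.comp_neg
  rw [← integrableOn_univ, ← Iio_union_Ici (a := (0 : ℝ))]
  exact hneg.union ((integrableOn_Ici_iff_integrableOn_Ioi (by finiteness)).2 hpos)

end Measure

section Young

variable {G : Type*} [AddGroup G] [MeasurableSpace G] [MeasurableAdd₂ G] [MeasurableNeg G]
  {μ : Measure G} [SFinite μ] [μ.IsAddRightInvariant] [μ.IsNegInvariant]
  {f g K : G → ℝ} {p q r : ℝ}

theorem integrable_mul_mul_comp_sub (hp : 1 ≤ p) (hq : 1 ≤ q) (hr : 1 ≤ r)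
    (hpqr : p⁻¹ + q⁻¹ + r⁻¹ = 2) (hf : MemLp f (ENNReal.ofReal p) μ)
    (hg : MemLp g (ENNReal.ofReal q) μ) (hK : MemLp K (ENNReal.ofReal r) μ) :
    Integrable (fun z : G × G => f z.1 * g z.2 * K (z.1 - z.2)) (μ.prod μ) := by
  have hfp := (memLp_ofReal_iff_integrable_norm_rpow (by linarith) hf.1).1 hf
  have hgq := (memLp_ofReal_iff_integrable_norm_rpow (by linarith) hg.1).1 hg
  have hKr := (memLp_ofReal_iff_integrable_norm_rpow (by linarith) hK.1).1 hK
  have hfg : Integrable (fun z : G × G => ‖f z.1‖ ^ p * ‖g z.2‖ ^ q) (μ.prod μ) :=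
    hfp.mul_prod hgq
  have hfK : Integrable (fun z : G × G => ‖f z.1‖ ^ p * ‖K (z.1 - z.2)‖ ^ r) (μ.prod μ) := by
    simpa [Function.comp_def] using
      (measurePreserving_prod_sub μ μ).integrable_comp_of_integrable (hfp.mul_prod hKr.comp_neg)
  have hgK : Integrable (fun z : G × G => ‖g z.2‖ ^ q * ‖K (z.1 - z.2)‖ ^ r) (μ.prod μ) := by
    simpa [Function.comp_def, mul_comm] using
      (measurePreserving_sub_prod μ μ).integrable_comp_of_integrable (hKr.mul_prod hgq)
  have hmeas : AEStronglyMeasurable (fun z : G × G => f z.1 * g z.2 * K (z.1 - z.2)) (μ.prod μ) :=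
    (hf.1.comp_fst.mul hg.1.comp_snd).mul <| hK.1.comp_quasiMeasurePreserving <|
      Measure.quasiMeasurePreserving_fst.comp
        (measurePreserving_sub_prod μ μ).quasiMeasurePreserving
  refine (((hfg.const_mul (1 - r⁻¹)).add (hfK.const_mul (1 - q⁻¹))).add
    (hgK.const_mul (1 - p⁻¹))).mono' hmeas (.of_forall fun z => ?_)
  simp only [norm_mul]
  exact mul_mul_le_of_inv_add_inv_add_inv_eq_two (norm_nonneg _) (norm_nonneg _) (norm_nonneg _)
    hp hq hr hpqr

end Young

section TensorSuperposition

variable {α Ω ι : Type*} [Fintype ι] {f g : α → ℝ} {φ : α → Ω → ℝ}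

/-- The superposition `x ↦ ∫ f(u) ∏ᵢ φ_u(xᵢ) dμ(u)` of the tensor powers of the functions `φ_u`,
of which the filtered Hermite kernels are instances. -/
noncomputable def tensorSuperposition [MeasurableSpace α] (μ : Measure α) (f : α → ℝ)
    (φ : α → Ω → ℝ) (x : ι → Ω) : ℝ :=
  ∫ u, f u * ∏ i, φ u (x i) ∂μ

/-- The integrand `f(u) g(v) ∏ᵢ φ_u(xᵢ) φ_v(xᵢ)` of the product of two tensor superpositions, as a
function of `(x, (u, v))`. -/
def tensorIntegrand (f g : α → ℝ) (φ : α → Ω → ℝ) (w : (ι → Ω) × α × α) : ℝ :=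
  f w.2.1 * g w.2.2 * ∏ i, φ w.2.1 (w.1 i) * φ w.2.2 (w.1 i)

theorem integral_tensorIntegrand_right [MeasurableSpace α] {μ : Measure α} [SFinite μ] (x : ι → Ω) :
    ∫ z, tensorIntegrand f g φ (x, z) ∂μ.prod μ =
      tensorSuperposition μ f φ x * tensorSuperposition μ g φ x := by
  rw [tensorSuperposition, tensorSuperposition, ← integral_prod_mul]
  congr with z
  rw [tensorIntegrand, Finset.prod_mul_distrib]
  ring

theorem integral_tensorIntegrand_left [MeasurableSpace Ω] {ν : Measure Ω} [SigmaFinite ν]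
    (z : α × α) :
    ∫ x : ι → Ω, tensorIntegrand f g φ (x, z) ∂(Measure.pi fun _ => ν) =
      f z.1 * g z.2 * (∫ x, φ z.1 x * φ z.2 x ∂ν) ^ Fintype.card ι := by
  simp only [tensorIntegrand]
  rw [integral_const_mul, integral_fintype_prod_eq_pow fun x => φ z.1 x * φ z.2 x]

variable [MeasurableSpace α] [MeasurableSpace Ω]

theorem measurable_tensorIntegrand (hf : Measurable f) (hg : Measurable g)
    (hφ : Measurable (Function.uncurry φ)) :
    Measurable (tensorIntegrand (ι := ι) f g φ) := by
  have hfst (i : ι) : Measurable fun w : (ι → Ω) × α × α => φ w.2.1 (w.1 i) :=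
    hφ.comp (f := fun w : (ι → Ω) × α × α => (w.2.1, w.1 i)) (by fun_prop)
  have hsnd (i : ι) : Measurable fun w : (ι → Ω) × α × α => φ w.2.2 (w.1 i) :=
    hφ.comp (f := fun w : (ι → Ω) × α × α => (w.2.2, w.1 i)) (by fun_prop)
  have hfg : Measurable fun w : (ι → Ω) × α × α => f w.2.1 * g w.2.2 := by fun_prop
  exact hfg.mul (Finset.measurable_prod _ fun i _ => (hfst i).mul (hsnd i))

variable {μ : Measure α} {ν : Measure Ω} [SFinite μ]

theorem integrable_tensorSuperposition_mul
    (h : Integrable (tensorIntegrand (ι := ι) f g φ) ((Measure.pi fun _ => ν).prod (μ.prod μ))) :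
    Integrable (fun x : ι → Ω => tensorSuperposition μ f φ x * tensorSuperposition μ g φ x)
      (Measure.pi fun _ => ν) := by
  simpa only [integral_tensorIntegrand_right] using h.integral_prod_left

variable [SigmaFinite ν]

theorem integrable_tensorIntegrand {B : α × α → ℝ} (hf : Measurable f) (hg : Measurable g)
    (hφ : Measurable (Function.uncurry φ))
    (hφφ : ∀ᵐ z ∂μ.prod μ, Integrable (fun x => φ z.1 x * φ z.2 x) ν)
    (hB : Integrable B (μ.prod μ))
    (hle : ∀ᵐ z ∂μ.prod μ,
      |f z.1 * g z.2| * (∫ x, |φ z.1 x * φ z.2 x| ∂ν) ^ Fintype.card ι ≤ B z) :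
    Integrable (tensorIntegrand (ι := ι) f g φ) ((Measure.pi fun _ => ν).prod (μ.prod μ)) := by
  have hmeas := measurable_tensorIntegrand (ι := ι) hf hg hφ
  refine (integrable_prod_iff' hmeas.aestronglyMeasurable).2 ⟨?_, ?_⟩
  · filter_upwards [hφφ] with z hz
    exact (Integrable.fintype_prod fun _ : ι => hz).const_mul (f z.1 * g z.2)
  · refine hB.mono' hmeas.norm.stronglyMeasurable.integral_prod_left'.aestronglyMeasurable ?_
    filter_upwards [hle] with z hz
    rw [norm_of_nonneg (integral_nonneg fun _ => norm_nonneg _)]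
    simpa only [tensorIntegrand, norm_mul, norm_prod, norm_eq_abs, abs_mul, integral_const_mul,
      integral_fintype_prod_eq_pow (fun x => |φ z.1 x| * |φ z.2 x|)] using hz

theorem integral_tensorSuperposition_mul
    (h : Integrable (tensorIntegrand (ι := ι) f g φ) ((Measure.pi fun _ => ν).prod (μ.prod μ))) :
    ∫ x : ι → Ω, tensorSuperposition μ f φ x * tensorSuperposition μ g φ x
        ∂(Measure.pi fun _ => ν) =
      ∫ u, ∫ v, f u * g v * (∫ x, φ u x * φ v x ∂ν) ^ Fintype.card ι ∂μ ∂μ := by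
  have hright := h.integral_prod_right
  simp only [integral_tensorIntegrand_left] at hright
  calc ∫ x : ι → Ω, tensorSuperposition μ f φ x * tensorSuperposition μ g φ x
          ∂(Measure.pi fun _ => ν)
      = ∫ z, f z.1 * g z.2 * (∫ x, φ z.1 x * φ z.2 x ∂ν) ^ Fintype.card ι ∂μ.prod μ := by
        simp only [← integral_tensorIntegrand_right, ← integral_tensorIntegrand_left (ι := ι)]
        exact integral_integral_swap h
    _ = _ := integral_prod _ hright

end TensorSuperposition

section TemperedFactor

variable {g : ℝ → ℝ} {a lam u v w : ℝ}

/-- The one-dimensional factor `x ↦ g((u - x)₊) e^{-lam (u - x)₊} 1_{x < u}` of the tempered Hermite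
kernel. -/
noncomputable def temperedFactor (g : ℝ → ℝ) (lam u x : ℝ) : ℝ :=
  (Iio u).indicator (fun x => g (u - x) * exp (-lam * (u - x))) x

/-- The overlap integral `∫₀^∞ g(y) g(1 + y) e^{-2 lam w y} dy` of two tempered factors at
distance `w`. -/
noncomputable def temperedOverlap (g : ℝ → ℝ) (lam w : ℝ) : ℝ :=
  ∫ y in Ioi (0 : ℝ), g y * g (1 + y) * exp (-2 * lam * w * y)

theorem measurable_uncurry_temperedFactor (hg : Measurable g) :
    Measurable (Function.uncurry (temperedFactor g lam)) :=
  Measurable.indicator (f := fun z : ℝ × ℝ => g (z.1 - z.2) * exp (-lam * (z.1 - z.2)))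
    (by fun_prop) (measurableSet_lt measurable_snd measurable_fst)

theorem abs_temperedFactor (x : ℝ) :
    |temperedFactor g lam u x| = temperedFactor (fun y => |g y|) lam u x := by
  by_cases hx : x < u <;> simp [temperedFactor, hx, abs_mul]

theorem prod_temperedFactor {ι : Type*} [Fintype ι] (x : ι → ℝ) :
    ∏ i, temperedFactor g lam u (x i) =
      {s | ∀ i, x i < s}.indicator (fun s => ∏ i, g (s - x i) * exp (-lam * (s - x i))) u := by
  by_cases h : ∀ i, x i < u
  · simp [temperedFactor, h]
  · obtain ⟨i, hi⟩ := not_forall.1 h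
    rw [indicator_of_notMem (s := {s | ∀ i, x i < s}) h]
    exact Finset.prod_eq_zero (Finset.mem_univ i) (indicator_of_notMem (s := Iio u) hi _)

theorem integrableOn_temperedOverlap (hlam : 0 ≤ lam) (hw : 0 ≤ w)
    (hint : IntegrableOn (fun y => g y * g (1 + y)) (Ioi 0)) :
    IntegrableOn (fun y => g y * g (1 + y) * exp (-2 * lam * w * y)) (Ioi 0) := by
  refine hint.mul_bdd (c := 1) (by fun_prop) (ae_restrict_of_forall_mem measurableSet_Ioi ?_)
  intro y (hy : 0 < y)
  rw [norm_eq_abs, abs_exp, exp_le_one_iff]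
  linarith [show 0 ≤ lam * w * y by positivity]

theorem temperedOverlap_abs_le (hlam : 0 ≤ lam) (hw : 0 ≤ w)
    (hint : IntegrableOn (fun y => |g y * g (1 + y)|) (Ioi 0)) :
    temperedOverlap (fun y => |g y|) lam w ≤ ∫ y in Ioi (0 : ℝ), |g y * g (1 + y)| := by
  refine integral_mono_of_nonneg (.of_forall fun y => by positivity) hint
    (ae_restrict_of_forall_mem measurableSet_Ioi fun y (hy : 0 < y) => ?_)
  beta_reduce
  rw [abs_mul]
  refine mul_le_of_le_one_right (by positivity) (exp_le_one_iff.2 ?_)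
  linarith [show 0 ≤ lam * w * y by positivity]

/-- Positive homogeneity of degree `a` on `(0, ∞)`. -/
def PosHomogeneous (a : ℝ) (g : ℝ → ℝ) : Prop :=
  ∀ c : ℝ, 0 < c → ∀ y : ℝ, 0 < y → g (c * y) = c ^ a * g y

theorem PosHomogeneous.abs (hg : PosHomogeneous a g) : PosHomogeneous a fun y => |g y| := by
  intro c hc y hy
  beta_reduce
  rw [hg c hc y hy, abs_mul, abs_of_pos (rpow_pos_of_pos hc a)]

theorem temperedFactor_mul_temperedFactor_sub_mul (hg : PosHomogeneous a g) (hw : 0 < w) (y : ℝ) :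
    temperedFactor g lam u (u - w * y) * temperedFactor g lam (u + w) (u - w * y) =
      (Ioi 0).indicator (fun y => w ^ (2 * a) * exp (-lam * w) *
        (g y * g (1 + y) * exp (-2 * lam * w * y))) y := by
  rcases lt_or_ge 0 y with hy | hy
  · have hwy : 0 < w * y := mul_pos hw hy
    have hexp : exp (-lam * (w * y)) * exp (-lam * (w * (1 + y))) =
        exp (-lam * w) * exp (-2 * lam * w * y) := by
      rw [← exp_add, ← exp_add]
      ring_nf
    rw [indicator_of_mem (mem_Ioi.2 hy), temperedFactor, temperedFactor,
      indicator_of_mem (mem_Iio.2 (by linarith)), indicator_of_mem (mem_Iio.2 (by linarith)),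
      sub_sub_cancel, show u + w - (u - w * y) = w * (1 + y) by ring, hg w hw y hy,
      hg w hw (1 + y) (by linarith), two_mul a, rpow_add hw]
    linear_combination w ^ a * w ^ a * g y * g (1 + y) * hexp
  · have hwy : w * y ≤ 0 := mul_nonpos_of_nonneg_of_nonpos hw.le hy
    rw [indicator_of_notMem (notMem_Ioi.2 hy), temperedFactor,
      indicator_of_notMem (notMem_Iio.2 (by linarith)), zero_mul]

theorem integrable_temperedFactor_mul (hg : PosHomogeneous a g) (hlam : 0 ≤ lam)
    (hint : IntegrableOn (fun y => g y * g (1 + y)) (Ioi 0)) (huv : u ≠ v) :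
    Integrable (fun x => temperedFactor g lam u x * temperedFactor g lam v x) := by
  wlog h : u < v generalizing u v
  · simpa only [mul_comm] using this huv.symm (huv.lt_or_gt.resolve_left h)
  obtain ⟨w, hw, rfl⟩ : ∃ w, 0 < w ∧ v = u + w := ⟨v - u, sub_pos.2 h, by ring⟩
  rw [← integrable_comp_sub_left _ u, ← integrable_comp_mul_left_iff _ hw.ne']
  simp only [temperedFactor_mul_temperedFactor_sub_mul hg hw]
  exact (integrable_indicator_iff measurableSet_Ioi).2
    ((integrableOn_temperedOverlap hlam hw.le hint).const_mul _)

theorem integral_temperedFactor_mul (hg : PosHomogeneous a g) (huv : u ≠ v) :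
    ∫ x, temperedFactor g lam u x * temperedFactor g lam v x =
      exp (-lam * |u - v|) * |u - v| ^ (2 * a + 1) * temperedOverlap g lam |u - v| := by
  wlog h : u < v generalizing u v
  · rw [abs_sub_comm, ← this huv.symm (huv.lt_or_gt.resolve_left h)]
    simp only [mul_comm]
  obtain ⟨w, hw, rfl⟩ : ∃ w, 0 < w ∧ v = u + w := ⟨v - u, sub_pos.2 h, by ring⟩
  set F : ℝ → ℝ := fun x => temperedFactor g lam u x * temperedFactor g lam (u + w) x with hF
  have hdist : |u - (u + w)| = w := by rw [sub_add_cancel_left, abs_neg, abs_of_pos hw]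
  calc ∫ x, F x = w * ∫ y, F (u - w * y) := by
        rw [Measure.integral_comp_mul_left (fun x => F (u - x)),
          integral_sub_left_eq_self F volume u, abs_of_pos (inv_pos.2 hw), smul_eq_mul,
          mul_inv_cancel_left₀ hw.ne']
    _ = w * (w ^ (2 * a) * exp (-lam * w) * temperedOverlap g lam w) := by
        simp only [hF, temperedFactor_mul_temperedFactor_sub_mul hg hw]
        rw [integral_indicator measurableSet_Ioi, integral_const_mul, temperedOverlap]
    _ = _ := by
        rw [hdist, rpow_add hw, rpow_one]
        ring

theorem integral_abs_temperedFactor_mul_le (hg : PosHomogeneous a g) (hlam : 0 ≤ lam)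
    (hint : IntegrableOn (fun y => |g y * g (1 + y)|) (Ioi 0)) (huv : u ≠ v) :
    ∫ x, |temperedFactor g lam u x * temperedFactor g lam v x| ≤
      exp (-lam * |u - v|) * |u - v| ^ (2 * a + 1) * ∫ y in Ioi (0 : ℝ), |g y * g (1 + y)| := by
  simp only [abs_mul (temperedFactor _ _ _ _), abs_temperedFactor]
  rw [integral_temperedFactor_mul hg.abs huv]
  gcongr
  exact temperedOverlap_abs_le hlam (abs_nonneg _) hint

end TemperedFactor

section LpBounds

variable {b c p γ : ℝ}

theorem memLp_exp_neg_mul_abs_mul_rpow (hc : 0 < c) (hp : 0 < p) (h : -1 < γ * p) :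
    MemLp (fun w : ℝ => exp (-c * |w|) * |w| ^ γ) (ENNReal.ofReal p) := by
  refine (memLp_ofReal_iff_integrable_norm_rpow hp (by fun_prop)).2 ?_
  have hint := integrable_comp_abs <|
    integrableOn_rpow_mul_exp_neg_mul_rpow h one_pos (mul_pos hc hp)
  refine hint.congr (.of_forall fun w => ?_)
  beta_reduce
  rw [norm_of_nonneg (r := exp _ * _) (by positivity), mul_rpow (by positivity) (by positivity),
    ← rpow_mul (abs_nonneg w), ← exp_mul, rpow_one, mul_comm]
  ring_nf

theorem memLp_rpow_Ioi_one (hp : 0 < p) (h : b * p < -1) :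
    MemLp (fun x : ℝ => x ^ b) (ENNReal.ofReal p) (volume.restrict (Ioi 1)) := by
  refine (memLp_ofReal_iff_integrable_norm_rpow hp (by fun_prop)).2 ?_
  refine (integrableOn_Ioi_rpow_of_lt h one_pos).congr_fun (fun x (hx : 1 < x) => ?_)
    measurableSet_Ioi
  have hx₀ : 0 ≤ x := by linarith
  beta_reduce
  rw [norm_of_nonneg (by positivity), rpow_mul hx₀]

theorem memLp_max_rpow_Iic (hb : b ≠ 0) (hp : 0 < p) (h : -1 < b * p) (M : ℝ) :
    MemLp (fun x : ℝ => max x 0 ^ b) (ENNReal.ofReal p) (volume.restrict (Iic M)) := by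
  have hmeas : Measurable fun x : ℝ => max x 0 ^ b := by fun_prop
  refine (memLp_ofReal_iff_integrable_norm_rpow hp hmeas.aestronglyMeasurable).2 ?_
  have hneg : IntegrableOn (fun x : ℝ => ‖max x 0 ^ b‖ ^ p) (Iic 0) :=
    integrableOn_zero.congr_fun
      (fun x (hx : x ≤ 0) => by simp [max_eq_right hx, zero_rpow hb, zero_rpow hp.ne'])
      measurableSet_Iic
  have hpos : IntegrableOn (fun x : ℝ => ‖max x 0 ^ b‖ ^ p) (Ioc 0 (max M 0)) := by
    have hrpow := (intervalIntegrable_iff_integrableOn_Ioc_of_le (le_max_right M 0)).1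
      (intervalIntegral.intervalIntegrable_rpow' h)
    refine hrpow.congr_fun (fun x hx => ?_) measurableSet_Ioc
    beta_reduce
    rw [max_eq_left hx.1.le, norm_of_nonneg (rpow_nonneg hx.1.le b), rpow_mul hx.1.le]
  exact (hneg.union hpos).mono_set <| by
    rw [Iic_union_Ioc_eq_Iic (le_max_right M 0)]
    exact Iic_subset_Iic.2 (le_max_left M 0)

theorem memLp_max_sub_rpow_Ici (hb : b ≠ 0) (hp : 0 < p) (h : -1 < b * p) (t M : ℝ) :
    MemLp (fun s : ℝ => max (t - s) 0 ^ b) (ENNReal.ofReal p) (volume.restrict (Ici M)) := by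
  have hmp := (Measure.measurePreserving_sub_left volume t).restrict_preimage
    (measurableSet_Iic (a := t - M))
  rw [preimage_const_sub_Iic, sub_sub_cancel] at hmp
  exact (memLp_max_rpow_Iic hb hp h (t - M)).comp_measurePreserving hmp

end LpBounds

section FractionalFilter

variable {b p γ c s t : ℝ}

theorem measurable_ell : Measurable (ell t b) := by
  unfold ell
  fun_prop

theorem abs_ell_le (hb : b ≠ 0) (hb₁ : b ≤ 1) (hs : s < -|t|) :
    |ell t b s| ≤ |t| * (-|t| - s) ^ (b - 1) := by
  have ht := neg_abs_le t
  have h := abs_rpow_sub_rpow_le (c := -|t| - s) (x := -s) (y := t - s) (by linarith)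
    (by linarith [abs_nonneg t]) (by linarith) hb₁
  rw [ell, max_eq_left (by linarith), max_eq_left (by linarith [abs_nonneg t]), abs_div,
    div_le_iff₀ (abs_pos.2 hb)]
  rw [sub_neg_eq_add, sub_add_cancel] at h
  linarith

theorem memLp_ell (hp : 0 < p) (hb : b ≠ 0) (hloc : -1 < b * p) (htail : (b - 1) * p < -1) :
    MemLp (ell t b) (ENNReal.ofReal p) := by
  have hnear : MemLp (ell t b) (ENNReal.ofReal p) (volume.restrict (Ici (-|t| - 1))) := by
    refine (((memLp_max_sub_rpow_Ici hb hp hloc t _).sub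
      (memLp_max_sub_rpow_Ici hb hp hloc 0 _)).mul_const b⁻¹).ae_eq (.of_forall fun s => ?_)
    simp only [ell, Pi.sub_apply, zero_sub, div_eq_mul_inv]
  have hfar : MemLp (ell t b) (ENNReal.ofReal p) (volume.restrict (Iio (-|t| - 1))) := by
    have hmp := (Measure.measurePreserving_sub_left volume (-|t|)).restrict_preimage
      (measurableSet_Ioi (a := (1 : ℝ)))
    rw [preimage_const_sub_Ioi] at hmp
    refine ((memLp_rpow_Ioi_one hp htail).comp_measurePreserving hmp).of_le_mul (c := |t|)
      measurable_ell.aestronglyMeasurable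
      (ae_restrict_of_forall_mem measurableSet_Iio fun s (hs : s < -|t| - 1) => ?_)
    have hdist : 0 ≤ -|t| - s := by linarith
    rw [Function.comp_apply, norm_of_nonneg (rpow_nonneg hdist _)]
    exact abs_ell_le hb (by nlinarith) (by linarith)
  rw [← indicator_self_add_compl (Ici (-|t| - 1)) (ell t b), compl_Ici]
  exact ((memLp_indicator_iff_restrict measurableSet_Ici).2 hnear).add
    ((memLp_indicator_iff_restrict measurableSet_Iio).2 hfar)

theorem integrable_ell_mul_ell_mul_exp_mul_rpow (hc : 0 < c) (hγ : -1 < γ) (hb : b ≠ 0)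
    (hb₁ : -1 < b) (hbγ : -γ / 2 - 1 < b) (hb₂ : b < 1 / 2) :
    Integrable fun z : ℝ × ℝ =>
      ell s b z.1 * ell t b z.2 * (exp (-c * |z.1 - z.2|) * |z.1 - z.2| ^ γ) := by
  -- Young's inequality is applied with `ell` in `L^p`, `1/p = 1 - θ/2`, and the kernel in
  -- `L^(1/θ)`: `b < θ/2` is integrability of `|ell|^p` at infinity, `θ < 2 (1 + b)` near the
  -- singularities, and `-γ < θ` is integrability of the kernel power at the origin.
  obtain ⟨θ, hlower, hupper⟩ : ∃ θ, max 0 (max (2 * b) (-γ)) < θ ∧ θ < min 1 (2 * (1 + b)) :=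
    exists_between <| max_lt (lt_min one_pos (by linarith)) <|
      max_lt (lt_min (by linarith) (by linarith)) (lt_min (by linarith) (by linarith))
  simp only [max_lt_iff, lt_min_iff] at hlower hupper
  obtain ⟨hθ, hbθ, hγθ⟩ := hlower
  obtain ⟨hθ₁, hθb⟩ := hupper
  have hp : 0 < 1 - θ / 2 := by linarith
  have hell (t : ℝ) : MemLp (ell t b) (ENNReal.ofReal (1 - θ / 2)⁻¹) := by
    refine memLp_ell (inv_pos.2 hp) hb ?_ ?_
    · rw [← div_eq_mul_inv, lt_div_iff₀ hp]
      linarith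
    · rw [← div_eq_mul_inv, div_lt_iff₀ hp]
      linarith
  have hkernel : MemLp (fun w : ℝ => exp (-c * |w|) * |w| ^ γ) (ENNReal.ofReal θ⁻¹) := by
    refine memLp_exp_neg_mul_abs_mul_rpow hc (inv_pos.2 hθ) ?_
    rw [← div_eq_mul_inv, lt_div_iff₀ hθ]
    linarith
  have one_le_p : 1 ≤ (1 - θ / 2)⁻¹ := (one_le_inv₀ hp).2 (by linarith)
  refine integrable_mul_mul_comp_sub one_le_p one_le_p ((one_le_inv₀ hθ).2 hθ₁.le) ?_
    (hell s) (hell t) hkernel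
  simp only [inv_inv]
  ring

end FractionalFilter

section Covariance

variable {k : ℕ} {a b lam s t : ℝ} {g₀ : ℝ → ℝ}

theorem tghFiltProdKernel_eq_tensorSuperposition :
    tghFiltProdKernel k g₀ lam b t =
      tensorSuperposition volume (ell t b) (temperedFactor g₀ lam) := by
  ext x
  simp only [tghFiltProdKernel, tensorSuperposition, prod_temperedFactor]

theorem integrable_tensorIntegrand_ell_temperedFactor (hk : 1 ≤ k)
    (hγ : -1 < (k : ℝ) * (2 * a + 1)) (hb : b ≠ 0) (hb₁ : -1 < b)
    (hbγ : -((k : ℝ) * (2 * a + 1)) / 2 - 1 < b) (hb₂ : b < 1 / 2)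
    (hmeas : Measurable g₀) (hhom : PosHomogeneous a g₀)
    (hint : IntegrableOn (fun y => |g₀ y * g₀ (1 + y)|) (Ioi 0)) (hlam : 0 < lam) :
    Integrable (tensorIntegrand (ι := Fin k) (ell s b) (ell t b) (temperedFactor g₀ lam)) := by
  have hint' : IntegrableOn (fun y => g₀ y * g₀ (1 + y)) (Ioi 0) :=
    (integrable_norm_iff (by fun_prop)).1 hint
  set C := ∫ y in Ioi (0 : ℝ), |g₀ y * g₀ (1 + y)|
  have hbound := (integrable_ell_mul_ell_mul_exp_mul_rpow (s := s) (t := t)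
    (by positivity : 0 < lam * k) hγ hb hb₁ hbγ hb₂).abs.mul_const (C ^ k)
  refine integrable_tensorIntegrand measurable_ell measurable_ell
    (measurable_uncurry_temperedFactor hmeas) ?_ hbound ?_
  · filter_upwards [ae_fst_ne_snd] with z hz
    exact integrable_temperedFactor_mul hhom hlam.le hint' hz
  · filter_upwards [ae_fst_ne_snd] with z hz
    rw [Fintype.card_fin, abs_mul (ell s b z.1 * ell t b z.2), mul_assoc,
      abs_of_nonneg (a := exp _ * _) (by positivity), ← neg_mul,
      ← exp_mul_rpow_mul_pow (abs_nonneg _)]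
    gcongr
    exact integral_abs_temperedFactor_mul_le hhom hlam.le hint hz

theorem integral_temperedFactor_mul_pow (hhom : PosHomogeneous a g₀) {u v : ℝ} (huv : u ≠ v) :
    (∫ x, temperedFactor g₀ lam u x * temperedFactor g₀ lam v x) ^ k =
      exp (-lam * k * |u - v|) * |u - v| ^ ((k : ℝ) * (2 * a + 1)) *
        temperedOverlap g₀ lam |u - v| ^ k := by
  rw [integral_temperedFactor_mul hhom huv, exp_mul_rpow_mul_pow (abs_nonneg _)]

theorem neg_one_lt_mul_two_mul_add_one (hk : 1 ≤ k) (ha : -1 / 2 - 1 / (2 * (k : ℝ)) < a) :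
    -1 < (k : ℝ) * (2 * a + 1) := by
  have hk₀ : (0 : ℝ) < k := by exact_mod_cast hk
  have h := mul_lt_mul_of_pos_left ha hk₀
  field_simp at h
  linarith

theorem stmt16_general (hk : 1 ≤ k) (ha₁ : -1 / 2 - 1 / (2 * (k : ℝ)) < a) (ha₂ : a < -1 / 2)
    (hb : b ≠ 0)
    (hb₁ : -(k : ℝ) * a - (k : ℝ) / 2 - 1 < b) (hb₂ : b < 1 / 2)
    (hg₀ : Measurable g₀) (hhom : PosHomogeneous a g₀)
    (hint : IntegrableOn (fun y => |g₀ y * g₀ (1 + y)|) (Ioi 0)) (hlam : 0 < lam) :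
    Integrable (fun x : Fin k → ℝ =>
      tghFiltProdKernel k g₀ lam b t x * tghFiltProdKernel k g₀ lam b s x) ∧
    (∫ x : Fin k → ℝ, tghFiltProdKernel k g₀ lam b t x * tghFiltProdKernel k g₀ lam b s x) =
      ∫ u : ℝ, ∫ v : ℝ, ell s b u * ell t b v * exp (-lam * k * |u - v|) *
        |u - v| ^ ((k : ℝ) * (2 * a + 1)) * temperedOverlap g₀ lam |u - v| ^ k := by
  have hk₀ : (0 : ℝ) < k := by exact_mod_cast hk
  have hγ := neg_one_lt_mul_two_mul_add_one hk ha₁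
  have hγ₀ : (k : ℝ) * (2 * a + 1) < 0 := mul_neg_of_pos_of_neg hk₀ (by linarith)
  have hintegrand := integrable_tensorIntegrand_ell_temperedFactor (s := s) (t := t) hk hγ hb
    (by linarith) (by linarith) hb₂ hg₀ hhom hint hlam
  simp only [tghFiltProdKernel_eq_tensorSuperposition,
    mul_comm (tensorSuperposition _ (ell t b) _ _)]
  refine ⟨integrable_tensorSuperposition_mul hintegrand,
    (integral_tensorSuperposition_mul hintegrand).trans ?_⟩
  refine integral_congr_ae (.of_forall fun u => integral_congr_ae ?_)
  filter_upwards [volume.ae_ne u] with v hv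
  rw [Fintype.card_fin, integral_temperedFactor_mul_pow hhom hv.symm]
  ring

end Covariance

theorem stmt16 {k : ℕ} (hk : 1 ≤ k) (a : ℝ)
    (ha₁ : -1/2 - 1/(2*(k : ℝ)) < a) (ha₂ : a < -1/2)
    (b : ℝ) (hb : b ≠ 0)
    (hb₁ : -(k : ℝ) * a - (k : ℝ) / 2 - 1 < b) (hb₂ : b < -(k : ℝ) * a - (k : ℝ) / 2)
    (g₀ : ℝ → ℝ) (hg₀ : Measurable g₀)
    (hhom : ∀ c : ℝ, 0 < c → ∀ y : ℝ, 0 < y → g₀ (c * y) = c ^ a * g₀ y)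
    (hint : IntegrableOn (fun y : ℝ => |g₀ y * g₀ (1 + y)|) (Set.Ioi (0 : ℝ)))
    (lam : ℝ) (hlam : 0 < lam) (s t : ℝ) :
    -- absolute convergence
    Integrable (fun x : Fin k → ℝ =>
      tghFiltProdKernel k g₀ lam b t x * tghFiltProdKernel k g₀ lam b s x) ∧
    -- the covariance identity
    (∫ x : Fin k → ℝ,
        tghFiltProdKernel k g₀ lam b t x * tghFiltProdKernel k g₀ lam b s x) =
      ∫ u : ℝ, ∫ v : ℝ,
        ell s b u * ell t b v * Real.exp (-lam * (k : ℝ) * |u - v|) *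
          |u - v| ^ ((k : ℝ) * (2 * a + 1)) *
          (∫ y in Set.Ioi (0 : ℝ),
            g₀ y * g₀ (1 + y) * Real.exp (-2 * lam * |u - v| * y)) ^ k :=
  stmt16_general hk ha₁ ha₂ hb hb₁ (by linarith [neg_one_lt_mul_two_mul_add_one hk ha₁])
    hg₀ hhom hint hlam
end
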